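/- Let K be a closed, bounded, convex subset of a real Hilbert space H which is a dense continuously-embedded subspace of a Banach space B. Then K is closed in B. -/

import Mathlib

open Filter Topology in
/-- A decreasing sequence of nonempty closed convex sets in a real Hilbert space, the first of
which is bounded, admits a convergent selection (the points of minimal norm). -/
theorem exists_tendsto_mem_of_antitone_convex {H : Type*}
    [NormedAddCommGroup H] [InnerProductSpace ℝ H] [CompleteSpace H]
    (S : ℕ → Set H) (hanti : Antitone S) (hne : ∀ n, (S n).Nonempty)
    (hclosed : ∀ n, IsClosed (S n)) (hconv : ∀ n, Convex ℝ (S n))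
    (hbdd : Bornology.IsBounded (S 0)) :
    ∃ (u : ℕ → H) (x : H), (∀ n, u n ∈ S n) ∧ Tendsto u atTop (𝓝 x) := by
  choose u hu hmin using fun n =>
    exists_norm_eq_iInf_of_complete_convex (hne n) (hclosed n).isComplete (hconv n) 0
  have key : ∀ n, ∀ w ∈ S n, ‖w - u n‖ ^ 2 ≤ ‖w‖ ^ 2 - ‖u n‖ ^ 2 := by
    intro n w hw
    have h := (norm_eq_iInf_iff_real_inner_le_zero (hconv n) (hu n)).1 (hmin n) w hw
    rw [zero_sub, inner_neg_left, inner_sub_right, real_inner_self_eq_norm_sq] at h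
    rw [norm_sub_sq_real, real_inner_comm]
    linarith
  have hmem : ∀ {m n}, n ≤ m → u m ∈ S n := fun h => hanti h (hu _)
  have hmono : Monotone fun n => ‖u n‖ ^ 2 := fun n m h => by
    have := key n (u m) (hmem h)
    have := sq_nonneg ‖u m - u n‖
    simp only
    linarith
  obtain ⟨C, hC⟩ := hbdd.exists_norm_le
  have hba : BddAbove (Set.range fun n => ‖u n‖ ^ 2) := by
    refine ⟨C ^ 2, ?_⟩
    rintro _ ⟨n, rfl⟩
    exact pow_le_pow_left₀ (norm_nonneg _) (hC _ (hmem n.zero_le)) 2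
  have hlim := tendsto_atTop_ciSup hmono hba
  have hcauchy : CauchySeq u := by
    refine Metric.cauchySeq_iff'.2 fun ε hε => ?_
    obtain ⟨N, hN⟩ := (hlim.eventually (lt_mem_nhds (sub_lt_self _ (pow_pos hε 2)))).exists
    refine ⟨N, fun n hn => ?_⟩
    rw [dist_eq_norm]
    refine lt_of_pow_lt_pow_left₀ 2 hε.le ?_
    have h1 := key N (u n) (hmem hn)
    have h2 := le_ciSup hba n
    linarith
  obtain ⟨x, hx⟩ := cauchySeq_tendsto_of_complete hcauchy
  exact ⟨u, x, hu, hx⟩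

/-- Let `H` be a real Hilbert space densely and continuously included (via `j`) in a real
separable Banach space `B`. If `K ⊆ H` is closed, bounded and convex, then its image in
`B` is closed. -/
theorem stmt18 {B H : Type*}
    [NormedAddCommGroup B] [NormedSpace ℝ B] [CompleteSpace B]
    [TopologicalSpace.SeparableSpace B]
    [NormedAddCommGroup H] [InnerProductSpace ℝ H] [CompleteSpace H]
    (j : H →L[ℝ] B) (hj : Function.Injective j) (hdense : DenseRange j)
    (K : Set H) (hKc : IsClosed K) (hKb : Bornology.IsBounded K) (hKconv : Convex ℝ K) :
    IsClosed (j '' K) := by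
  refine isClosed_of_closure_subset fun b hb => ?_
  obtain ⟨u, x, hu, hx⟩ := exists_tendsto_mem_of_antitone_convex
    (fun n : ℕ => K ∩ j ⁻¹' Metric.closedBall b (1 / ((n : ℝ) + 1)))
    (fun n m h => Set.inter_subset_inter_right _
      (Set.preimage_mono (Metric.closedBall_subset_closedBall (Nat.one_div_le_one_div h))))
    (fun n => by
      obtain ⟨_, ⟨y, hy, rfl⟩, hyb⟩ := Metric.mem_closure_iff.1 hb _ (Nat.one_div_pos_of_nat (n := n))
      exact ⟨y, hy, Metric.mem_closedBall'.2 hyb.le⟩)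
    (fun n => hKc.inter (Metric.isClosed_closedBall.preimage j.continuous))
    (fun n => hKconv.inter ((convex_closedBall b _).linear_preimage j.toLinearMap))
    (hKb.subset Set.inter_subset_left)
  refine ⟨x, hKc.mem_of_tendsto hx (Filter.Eventually.of_forall fun n => (hu n).1), ?_⟩
  refine tendsto_nhds_unique ((j.continuous.tendsto x).comp hx) ?_
  exact tendsto_iff_dist_tendsto_zero.2 (squeeze_zero (fun _ => dist_nonneg)
    (fun n => (hu n).2) tendsto_one_div_add_atTop_nhds_zero_nat)
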